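/- Let d be a symmetric design. Then ∑_{s∈S} p_s T_s B_t = 0 and ∑_{s∈S} p_s F_s B_t = 0, hence C_{dij} = Ĉ_{dij} for all 1 ≤ i,j ≤ 2; moreover each C_{dij} is completely symmetric with all row and column sums zero, so that C_{dij} = c_{dij} B_t/(t−1) for all 1 ≤ i,j ≤ 2. -/

import Mathlib

open Matrix MeasureTheory
open scoped Classical

noncomputable section

/-- A treatment sequence: assigns a treatment in `Fin t` to each period in `Fin p`. -/
abbrev TrtSeq (p t : ℕ) := Fin p → Fin t

/-- Treatment/period incidence matrix `T_s`. -/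
def Tmat {p t : ℕ} (s : TrtSeq p t) : Matrix (Fin p) (Fin t) ℝ :=
  Matrix.of fun k i => if s k = i then 1 else 0

/-- Carryover incidence matrix `F_s`: first row zero, row `k` records the treatment
in period `k-1`. -/
def Fmat {p t : ℕ} (s : TrtSeq p t) : Matrix (Fin p) (Fin t) ℝ :=
  Matrix.of fun k i =>
    if (k : ℕ) = 0 then 0
    else if s ⟨(k : ℕ) - 1, Nat.lt_of_le_of_lt (Nat.sub_le _ _) k.isLt⟩ = i then 1 else 0

/-- The all-ones `m × m` matrix `J_m`. -/
def Jmat (m : ℕ) : Matrix (Fin m) (Fin m) ℝ := Matrix.of fun _ _ => 1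

/-- `B_t = I_t - J_t / t`. -/
def Bmat (t : ℕ) : Matrix (Fin t) (Fin t) ℝ := 1 - ((t : ℝ))⁻¹ • Jmat t

/-- `B̃ = Σ⁻¹ - Σ⁻¹ J_p Σ⁻¹ / (1_p' Σ⁻¹ 1_p)`. -/
def Btil {p : ℕ} (S : Matrix (Fin p) (Fin p) ℝ) : Matrix (Fin p) (Fin p) ℝ :=
  S⁻¹ - (((fun _ => (1 : ℝ)) : Fin p → ℝ) ⬝ᵥ (S⁻¹ *ᵥ fun _ => (1 : ℝ)))⁻¹ •
    (S⁻¹ * Jmat p * S⁻¹)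

/-- `G_1(s) = T_s`, `G_2(s) = F_s`. -/
def Gmat {p t : ℕ} (i : Fin 2) (s : TrtSeq p t) : Matrix (Fin p) (Fin t) ℝ :=
  if i = 0 then Tmat s else Fmat s

/-- An approximate design: nonnegative weights summing to one. -/
def IsDesign {p t : ℕ} (w : TrtSeq p t → ℝ) : Prop :=
  (∀ s, 0 ≤ w s) ∧ ∑ s : TrtSeq p t, w s = 1

/-- `Ĉ_{sij} = B_t G_i(s)' B̃ G_j(s) B_t`. -/
def Chat {p t : ℕ} (S : Matrix (Fin p) (Fin p) ℝ) (s : TrtSeq p t) (i j : Fin 2) :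
    Matrix (Fin t) (Fin t) ℝ :=
  Bmat t * (Gmat i s)ᵀ * Btil S * Gmat j s * Bmat t

/-- `c_{sij} = tr Ĉ_{sij}`. -/
def cseq {p t : ℕ} (S : Matrix (Fin p) (Fin p) ℝ) (s : TrtSeq p t) (i j : Fin 2) : ℝ :=
  (Chat S s i j).trace

/-- `Ĉ_{dij} = n ∑_s p_s Ĉ_{sij}`. -/
def ChatD {p t : ℕ} (n : ℕ) (S : Matrix (Fin p) (Fin p) ℝ) (w : TrtSeq p t → ℝ)
    (i j : Fin 2) : Matrix (Fin t) (Fin t) ℝ :=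
  (n : ℝ) • ∑ s : TrtSeq p t, w s • Chat S s i j

/-- `C_{dij} = Ĉ_{dij} - n (∑_s p_s G_i(s) B_t)' B̃ (∑_s p_s G_j(s) B_t)`. -/
def CD {p t : ℕ} (n : ℕ) (S : Matrix (Fin p) (Fin p) ℝ) (w : TrtSeq p t → ℝ)
    (i j : Fin 2) : Matrix (Fin t) (Fin t) ℝ :=
  ChatD n S w i j -
    (n : ℝ) • ((∑ s : TrtSeq p t, w s • (Gmat i s * Bmat t))ᵀ * Btil S *
      (∑ s : TrtSeq p t, w s • (Gmat j s * Bmat t)))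

/-- `c_{dij} = tr Ĉ_{dij} = n ∑_s p_s c_{sij}`. -/
def cD {p t : ℕ} (n : ℕ) (S : Matrix (Fin p) (Fin p) ℝ) (w : TrtSeq p t → ℝ)
    (i j : Fin 2) : ℝ :=
  (ChatD n S w i j).trace

/-- Fisher information matrix `C_{d,τ0,λ0}` for the direct treatment effects under the
proportional model. -/
def CInfo {p t : ℕ} (n : ℕ) (S : Matrix (Fin p) (Fin p) ℝ) (w : TrtSeq p t → ℝ)
    (τ0 : Fin t → ℝ) (l0 : ℝ) : Matrix (Fin t) (Fin t) ℝ :=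
  CD n S w 0 0 + l0 • (CD n S w 0 1 + CD n S w 1 0) + (l0 ^ 2) • CD n S w 1 1 -
    (τ0 ⬝ᵥ (CD n S w 1 1 *ᵥ τ0))⁻¹ •
      ((CD n S w 0 1 + l0 • CD n S w 1 1) * vecMulVec τ0 τ0 *
        (CD n S w 1 0 + l0 • CD n S w 1 1))

/-- Permutation matrix `S_σ` with `(S_σ)_{j,i} = 1` iff `i = σ j`. -/
def Smat {t : ℕ} (σ : Equiv.Perm (Fin t)) : Matrix (Fin t) (Fin t) ℝ :=
  Matrix.of fun j i => if i = σ j then 1 else 0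

/-- The relabelled sequence `σ ∘ s`. -/
def permSeq {p t : ℕ} (σ : Equiv.Perm (Fin t)) (s : TrtSeq p t) : TrtSeq p t := fun k => σ (s k)

/-- The design `σ d`, with weights `(σd)_s = p_{σ⁻¹ ∘ s}`. -/
def permDesign {p t : ℕ} (σ : Equiv.Perm (Fin t)) (w : TrtSeq p t → ℝ) : TrtSeq p t → ℝ :=
  fun s => w (permSeq σ⁻¹ s)

/-- A design is symmetric if its weights are invariant under treatment relabelling. -/
def IsSymmetricDesign {p t : ℕ} (w : TrtSeq p t → ℝ) : Prop :=
  ∀ (σ : Equiv.Perm (Fin t)) (s : TrtSeq p t), w (permSeq σ s) = w s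

/-- The symmetrized design `d*` with weights `p*_s = (1/t!) ∑_σ p_{σ⁻¹ ∘ s}`. -/
def symmetrize {p t : ℕ} (w : TrtSeq p t → ℝ) : TrtSeq p t → ℝ :=
  fun s => ((Nat.factorial t : ℝ))⁻¹ * ∑ σ : Equiv.Perm (Fin t), permDesign σ w s

/-- `q_s(x) = c_{s11} + 2 c_{s12} x + c_{s22} x²`. -/
def qSeq {p t : ℕ} (S : Matrix (Fin p) (Fin p) ℝ) (s : TrtSeq p t) (x : ℝ) : ℝ :=
  cseq S s 0 0 + 2 * cseq S s 0 1 * x + cseq S s 1 1 * x ^ 2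

/-- `q(x) = max_{s ∈ S} q_s(x)`. -/
def qMax (p t : ℕ) (S : Matrix (Fin p) (Fin p) ℝ) (x : ℝ) : ℝ :=
  sSup (Set.range fun s : TrtSeq p t => qSeq S s x)

/-- `y* = inf_x q(x)`. -/
def yStar (p t : ℕ) (S : Matrix (Fin p) (Fin p) ℝ) : ℝ := ⨅ x : ℝ, qMax p t S x

/-- `q_d(x) = ∑_s p_s q_s(x)`. -/
def qD {p t : ℕ} (S : Matrix (Fin p) (Fin p) ℝ) (w : TrtSeq p t → ℝ) (x : ℝ) : ℝ :=
  ∑ s : TrtSeq p t, w s * qSeq S s x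

/-- `x_d = -c_{d12}/c_{d22}`. -/
def xD {p t : ℕ} (n : ℕ) (S : Matrix (Fin p) (Fin p) ℝ) (w : TrtSeq p t → ℝ) : ℝ :=
  -(cD n S w 0 1) / cD n S w 1 1

/-- An exchangeable prior: a probability measure on `{τ : 1'τ = 0, τ ≠ 0}` that is
invariant under all coordinate permutations of `ℝ^t`. -/
def IsExchangeablePrior {t : ℕ} (g : Measure (Fin t → ℝ)) : Prop :=
  IsProbabilityMeasure g ∧
    g {τ : Fin t → ℝ | ¬((∑ i, τ i) = 0 ∧ τ ≠ 0)} = 0 ∧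
    ∀ σ : Equiv.Perm (Fin t), Measure.map (fun τ i => τ (σ i)) g = g

/-- `m_d(τ0) = min {ℓ' C_{d,τ0,λ0} ℓ : 1'ℓ = 0, ℓ'ℓ = 1}`. -/
def mD {p t : ℕ} (n : ℕ) (S : Matrix (Fin p) (Fin p) ℝ) (w : TrtSeq p t → ℝ) (l0 : ℝ)
    (τ0 : Fin t → ℝ) : ℝ :=
  sInf {v : ℝ | ∃ l : Fin t → ℝ, (∑ i, l i) = 0 ∧ l ⬝ᵥ l = 1 ∧
    v = l ⬝ᵥ (CInfo n S w τ0 l0 *ᵥ l)}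

/-- The E-criterion value `E_{g,λ0}(d) = ∫ m_d(τ0) g(dτ0)`. -/
def Ecrit {p t : ℕ} (n : ℕ) (S : Matrix (Fin p) (Fin p) ℝ) (g : Measure (Fin t → ℝ))
    (l0 : ℝ) (w : TrtSeq p t → ℝ) : ℝ :=
  ∫ τ0, mD n S w l0 τ0 ∂g

/-- Competing designs for E-optimality: designs with a.e. positive `τ0' C_{d22} τ0`
and `g`-integrable `m_d`. -/
def EAdmissible {p t : ℕ} (n : ℕ) (S : Matrix (Fin p) (Fin p) ℝ) (g : Measure (Fin t → ℝ))
    (l0 : ℝ) (w : TrtSeq p t → ℝ) : Prop :=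
  IsDesign w ∧ (∀ᵐ τ0 ∂g, 0 < τ0 ⬝ᵥ (CD n S w 1 1 *ᵥ τ0)) ∧
    Integrable (mD n S w l0) g

/-- `d` is `E_{g,λ0}`-optimal. -/
def EOptimal {p t : ℕ} (n : ℕ) (S : Matrix (Fin p) (Fin p) ℝ) (g : Measure (Fin t → ℝ))
    (l0 : ℝ) (w : TrtSeq p t → ℝ) : Prop :=
  ∀ w' : TrtSeq p t → ℝ, EAdmissible n S g l0 w' → Ecrit n S g l0 w' ≤ Ecrit n S g l0 w

/-- A pseudo symmetric design: treatments equireplicated in each period,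
and all `C_{dij}` completely symmetric. -/
def IsPseudoSymmetric {p t : ℕ} (n : ℕ) (S : Matrix (Fin p) (Fin p) ℝ)
    (w : TrtSeq p t → ℝ) : Prop :=
  (∀ (k : Fin p) (i : Fin t),
    (∑ s ∈ Finset.univ.filter fun s : TrtSeq p t => s k = i, w s) = 1 / (t : ℝ)) ∧
  ∀ i j : Fin 2, ∃ a b : ℝ, CD n S w i j = a • (1 : Matrix (Fin t) (Fin t) ℝ) + b • Jmat t

/-- Eigenvalues of a (Hermitian) matrix sorted increasingly with multiplicity. -/
def sortedEigs {t : ℕ} (C : Matrix (Fin t) (Fin t) ℝ) : Fin t → ℝ :=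
  if h : C.IsHermitian then (fun i => h.eigenvalues (Tuple.sort h.eigenvalues i))
  else fun _ => 0

/-- `Φ_D(C) = (∏_{i=1}^{t-1} a_i)^{1/(t-1)}` (eigenvalues sorted increasingly). -/
def PhiD {t : ℕ} (C : Matrix (Fin t) (Fin t) ℝ) : ℝ :=
  (∏ i ∈ Finset.univ.filter fun i : Fin t => (i : ℕ) ≠ 0, sortedEigs C i) ^ (((t : ℝ) - 1)⁻¹)

/-- `Φ_A(C) = (t-1)(∑_{i=1}^{t-1} a_i⁻¹)⁻¹` if `a_1 > 0`, else `0`. -/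
def PhiA {t : ℕ} (C : Matrix (Fin t) (Fin t) ℝ) : ℝ :=
  if ∀ i : Fin t, (i : ℕ) ≠ 0 → 0 < sortedEigs C i then
    ((t : ℝ) - 1) *
      (∑ i ∈ Finset.univ.filter fun i : Fin t => (i : ℕ) ≠ 0, (sortedEigs C i)⁻¹)⁻¹
  else 0

/-- `Φ_T(C) = tr(C)/(t-1)`. -/
def PhiT {t : ℕ} (C : Matrix (Fin t) (Fin t) ℝ) : ℝ := C.trace / ((t : ℝ) - 1)

/-- The criterion value `∫ Φ(C_{d,τ0,λ0}) g(dτ0)`. -/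
def PhiCrit {p t : ℕ} (n : ℕ) (S : Matrix (Fin p) (Fin p) ℝ)
    (Phi : Matrix (Fin t) (Fin t) ℝ → ℝ) (g : Measure (Fin t → ℝ)) (l0 : ℝ)
    (w : TrtSeq p t → ℝ) : ℝ :=
  ∫ τ0, Phi (CInfo n S w τ0 l0) ∂g

/-- Competing designs for a `Φ`-criterion. -/
def PhiAdmissible {p t : ℕ} (n : ℕ) (S : Matrix (Fin p) (Fin p) ℝ)
    (Phi : Matrix (Fin t) (Fin t) ℝ → ℝ) (g : Measure (Fin t → ℝ)) (l0 : ℝ)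
    (w : TrtSeq p t → ℝ) : Prop :=
  IsDesign w ∧ (∀ᵐ τ0 ∂g, 0 < τ0 ⬝ᵥ (CD n S w 1 1 *ᵥ τ0)) ∧
    Integrable (fun τ0 => Phi (CInfo n S w τ0 l0)) g

/-- `d` is `Φ_{g,λ0}`-optimal. -/
def PhiOptimal {p t : ℕ} (n : ℕ) (S : Matrix (Fin p) (Fin p) ℝ)
    (Phi : Matrix (Fin t) (Fin t) ℝ → ℝ) (g : Measure (Fin t → ℝ)) (l0 : ℝ)
    (w : TrtSeq p t → ℝ) : Prop :=
  ∀ w' : TrtSeq p t → ℝ, PhiAdmissible n S Phi g l0 w' →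
    PhiCrit n S Phi g l0 w' ≤ PhiCrit n S Phi g l0 w

/-- `H_1(s) = F_s`, `H_2(s) = T_s + λ0 F_s` (for estimating `λ`). -/
def Hmat {p t : ℕ} (l0 : ℝ) (i : Fin 2) (s : TrtSeq p t) : Matrix (Fin p) (Fin t) ℝ :=
  if i = 0 then Fmat s else Tmat s + l0 • Fmat s

/-- `Â_{sij} = B_t H_i(s)' B̃ H_j(s) B_t`. -/
def Ahat {p t : ℕ} (S : Matrix (Fin p) (Fin p) ℝ) (l0 : ℝ) (s : TrtSeq p t) (i j : Fin 2) :
    Matrix (Fin t) (Fin t) ℝ :=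
  Bmat t * (Hmat l0 i s)ᵀ * Btil S * Hmat l0 j s * Bmat t

/-- `h_{sij} = tr Â_{sij}`. -/
def hseq {p t : ℕ} (S : Matrix (Fin p) (Fin p) ℝ) (l0 : ℝ) (s : TrtSeq p t) (i j : Fin 2) : ℝ :=
  (Ahat S l0 s i j).trace

/-- `Â_{dij} = n ∑_s p_s Â_{sij}`. -/
def AhatD {p t : ℕ} (n : ℕ) (S : Matrix (Fin p) (Fin p) ℝ) (l0 : ℝ) (w : TrtSeq p t → ℝ)
    (i j : Fin 2) : Matrix (Fin t) (Fin t) ℝ :=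
  (n : ℝ) • ∑ s : TrtSeq p t, w s • Ahat S l0 s i j

/-- `A_{dij} = Â_{dij} - n (∑_s p_s H_i(s) B_t)' B̃ (∑_s p_s H_j(s) B_t)`. -/
def AD {p t : ℕ} (n : ℕ) (S : Matrix (Fin p) (Fin p) ℝ) (l0 : ℝ) (w : TrtSeq p t → ℝ)
    (i j : Fin 2) : Matrix (Fin t) (Fin t) ℝ :=
  AhatD n S l0 w i j -
    (n : ℝ) • ((∑ s : TrtSeq p t, w s • (Hmat l0 i s * Bmat t))ᵀ * Btil S *
      (∑ s : TrtSeq p t, w s • (Hmat l0 j s * Bmat t)))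

/-- `G` is a generalized inverse of `A`. -/
def IsGInv {t : ℕ} (A G : Matrix (Fin t) (Fin t) ℝ) : Prop := A * G * A = A

/-- `A_d(G) = A_{d11} - A_{d12} G A_{d21}` with `A_{d21} = A_{d12}'`. -/
def ADfun {p t : ℕ} (n : ℕ) (S : Matrix (Fin p) (Fin p) ℝ) (l0 : ℝ) (w : TrtSeq p t → ℝ)
    (G : Matrix (Fin t) (Fin t) ℝ) : Matrix (Fin t) (Fin t) ℝ :=
  AD n S l0 w 0 0 - AD n S l0 w 0 1 * G * (AD n S l0 w 0 1)ᵀ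

/-- `r_s(x) = h_{s11} + 2 h_{s12} x + h_{s22} x²`. -/
def rSeq {p t : ℕ} (S : Matrix (Fin p) (Fin p) ℝ) (l0 : ℝ) (s : TrtSeq p t) (x : ℝ) : ℝ :=
  hseq S l0 s 0 0 + 2 * hseq S l0 s 0 1 * x + hseq S l0 s 1 1 * x ^ 2

/-- `r(x) = max_s r_s(x)`. -/
def rMax (p t : ℕ) (S : Matrix (Fin p) (Fin p) ℝ) (l0 : ℝ) (x : ℝ) : ℝ :=
  sSup (Set.range fun s : TrtSeq p t => rSeq S l0 s x)

/-- `y_0 = inf_x r(x)`. -/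
def yZero (p t : ℕ) (S : Matrix (Fin p) (Fin p) ℝ) (l0 : ℝ) : ℝ := ⨅ x : ℝ, rMax p t S l0 x

theorem sum_permSeq {p t : ℕ} {M : Type*} [AddCommMonoid M] (σ : Equiv.Perm (Fin t))
    (f : TrtSeq p t → M) : ∑ s, f (permSeq σ s) = ∑ s, f s :=
  Fintype.sum_equiv (Equiv.arrowCongr (Equiv.refl (Fin p)) σ) _ _ (fun s => rfl)

theorem Gmat_perm {p t : ℕ} (i : Fin 2) (σ : Equiv.Perm (Fin t)) (s : TrtSeq p t) :
    (Gmat i (permSeq σ s)).submatrix id σ = Gmat i s := by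
  ext k a
  unfold Gmat
  split_ifs <;> simp [Tmat, Fmat, permSeq]

theorem Bmat_perm {t : ℕ} (σ : Equiv.Perm (Fin t)) :
    (Bmat t).submatrix σ σ = Bmat t := by
  ext a b
  simp [Bmat, Jmat, Matrix.one_apply]

theorem GB_perm {p t : ℕ} (i : Fin 2) (σ : Equiv.Perm (Fin t)) (s : TrtSeq p t) :
    (Gmat i (permSeq σ s) * Bmat t).submatrix id σ = Gmat i s * Bmat t := by
  rw [← Matrix.submatrix_mul_equiv _ _ id σ σ, Gmat_perm, Bmat_perm]

theorem Chat_eq {p t : ℕ} (S : Matrix (Fin p) (Fin p) ℝ) (s : TrtSeq p t) (i j : Fin 2) :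
    Chat S s i j = Bmat t * (Gmat i s)ᵀ * (Btil S * (Gmat j s * Bmat t)) := by
  simp only [Chat, Matrix.mul_assoc]

theorem Chat_perm {p t : ℕ} (S : Matrix (Fin p) (Fin p) ℝ) (i j : Fin 2)
    (σ : Equiv.Perm (Fin t)) (s : TrtSeq p t) :
    (Chat S (permSeq σ s) i j).submatrix σ σ = Chat S s i j := by
  rw [Chat_eq, Chat_eq, ← Matrix.submatrix_mul_equiv _ _ σ (Equiv.refl _) σ,
    ← Matrix.submatrix_mul_equiv _ _ σ σ (Equiv.refl _),
    ← Matrix.submatrix_mul_equiv _ _ (Equiv.refl _) (Equiv.refl _) σ]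
  have h1 := GB_perm j σ s
  have h2 : (Gmat i (permSeq σ s))ᵀ.submatrix σ (Equiv.refl _) = (Gmat i s)ᵀ := by
    rw [← Gmat_perm i σ s]; rfl
  rw [h2, Bmat_perm]
  simp only [Equiv.coe_refl] at *
  rw [h1, Matrix.submatrix_id_id]

theorem Bmat_one {t : ℕ} (ht : 3 ≤ t) : (Bmat t *ᵥ fun _ => (1 : ℝ)) = 0 := by
  have : (t : ℝ) ≠ 0 := by positivity
  ext a
  simp [Bmat, Jmat, Matrix.sub_mulVec, Matrix.mulVec, dotProduct, Matrix.one_apply, this]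

theorem one_Bmat {t : ℕ} (ht : 3 ≤ t) : ((fun _ => (1 : ℝ)) ᵥ* Bmat t) = 0 := by
  have : (t : ℝ) ≠ 0 := by positivity
  ext a
  simp [Bmat, Jmat, Matrix.vecMul, dotProduct, Matrix.one_apply, this]

theorem sumGB {p t : ℕ} (ht : 3 ≤ t) (w : TrtSeq p t → ℝ) (hsym : IsSymmetricDesign w)
    (i : Fin 2) : (∑ s : TrtSeq p t, w s • (Gmat i s * Bmat t)) = 0 := by
  set M := ∑ s : TrtSeq p t, w s • (Gmat i s * Bmat t) with hM
  have hinv : ∀ (σ : Equiv.Perm (Fin t)) k a, M k (σ a) = M k a := by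
    intro σ k a
    rw [hM, ← sum_permSeq σ]
    conv_rhs => rw [sum_permSeq σ (fun s => w s • (Gmat i s * Bmat t))]
    simp only [Matrix.sum_apply, Matrix.smul_apply]
    refine Finset.sum_congr rfl fun s _ => ?_
    rw [hsym σ s, ← GB_perm i σ s]; rfl
  have h0 : (M *ᵥ fun _ => (1 : ℝ)) = 0 := by
    rw [hM, Matrix.sum_mulVec]
    refine Finset.sum_eq_zero fun s _ => ?_
    rw [Matrix.smul_mulVec, ← Matrix.mulVec_mulVec, Bmat_one ht]; simp
  ext k a
  have h1 := congrFun h0 k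
  have h2 : ∀ b, M k b = M k a := fun b => by
    have := hinv (Equiv.swap a b) k a
    rwa [Equiv.swap_apply_left] at this
  have : (t : ℝ) ≠ 0 := by positivity
  simp [Matrix.mulVec, dotProduct, h2] at h1
  rcases h1 with h1 | h1
  · omega
  · exact h1

theorem ChatD_inv {p t : ℕ} (n : ℕ) (S : Matrix (Fin p) (Fin p) ℝ) (w : TrtSeq p t → ℝ)
    (hsym : IsSymmetricDesign w) (i j : Fin 2) (σ : Equiv.Perm (Fin t)) (a b : Fin t) :
    ChatD n S w i j (σ a) (σ b) = ChatD n S w i j a b := by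
  unfold ChatD
  rw [← sum_permSeq σ]
  conv_rhs => rw [sum_permSeq σ (fun s => w s • Chat S s i j)]
  simp only [Matrix.sum_apply, Matrix.smul_apply]
  congr 1
  refine Finset.sum_congr rfl fun s _ => ?_
  rw [hsym σ s, ← Chat_perm S i j σ s]; rfl

theorem ChatD_one {p t : ℕ} (ht : 3 ≤ t) (n : ℕ) (S : Matrix (Fin p) (Fin p) ℝ)
    (w : TrtSeq p t → ℝ) (i j : Fin 2) : (ChatD n S w i j *ᵥ fun _ => (1 : ℝ)) = 0 := by
  unfold ChatD
  rw [Matrix.smul_mulVec, Matrix.sum_mulVec, Finset.sum_eq_zero, smul_zero]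
  intro s _
  rw [Matrix.smul_mulVec, Chat, ← Matrix.mulVec_mulVec, Bmat_one ht]; simp

theorem one_ChatD {p t : ℕ} (ht : 3 ≤ t) (n : ℕ) (S : Matrix (Fin p) (Fin p) ℝ)
    (w : TrtSeq p t → ℝ) (i j : Fin 2) : ((fun _ => (1 : ℝ)) ᵥ* ChatD n S w i j) = 0 := by
  unfold ChatD
  rw [Matrix.vecMul_smul, Matrix.vecMul_sum, Finset.sum_eq_zero, smul_zero]
  intro s _
  rw [Matrix.vecMul_smul, Chat_eq, Matrix.mul_assoc, ← Matrix.vecMul_vecMul, one_Bmat ht]; simp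

theorem cs_of_inv {t : ℕ} (ht : 3 ≤ t) (C : Matrix (Fin t) (Fin t) ℝ)
    (h : ∀ (σ : Equiv.Perm (Fin t)) a b, C (σ a) (σ b) = C a b) :
    ∃ a b : ℝ, C = a • (1 : Matrix (Fin t) (Fin t) ℝ) + b • Jmat t := by
  let c : Fin t := ⟨0, by omega⟩
  let d : Fin t := ⟨1, by omega⟩
  have hcd : c ≠ d := by simp [c, d]
  refine ⟨C c c - C c d, C c d, ?_⟩
  ext a b
  by_cases hab : a = b
  · subst hab
    have := h (Equiv.swap a c) a a
    rw [Equiv.swap_apply_left] at this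
    simp [Jmat, this]
  · have h1 := h (Equiv.swap a c) a b
    rw [Equiv.swap_apply_left] at h1
    have hne : c ≠ Equiv.swap a c b := by
      intro e
      apply hab
      apply (Equiv.swap a c).injective
      rw [Equiv.swap_apply_left, ← e]
    have h2 := h (Equiv.swap (Equiv.swap a c b) d) c (Equiv.swap a c b)
    rw [Equiv.swap_apply_left, Equiv.swap_apply_of_ne_of_ne hne hcd] at h2
    simp [Jmat, hab, h2, h1]

theorem eq_smul_Bmat {t : ℕ} (ht : 3 ≤ t) (C : Matrix (Fin t) (Fin t) ℝ)
    (h : ∃ a b : ℝ, C = a • (1 : Matrix (Fin t) (Fin t) ℝ) + b • Jmat t)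
    (h0 : (C *ᵥ fun _ => (1 : ℝ)) = 0) :
    C = (C.trace / ((t : ℝ) - 1)) • Bmat t := by
  obtain ⟨a, b, rfl⟩ := h
  have h3 : (3 : ℝ) ≤ t := by exact_mod_cast ht
  have ht0 : (t : ℝ) ≠ 0 := by positivity
  have ht1 : (t : ℝ) - 1 ≠ 0 := by linarith
  have h1 := congrFun h0 ⟨0, by omega⟩
  simp [Jmat, Matrix.mulVec, dotProduct, Matrix.one_apply, Finset.sum_add_distrib] at h1
  have htr : (a • (1 : Matrix (Fin t) (Fin t) ℝ) + b • Jmat t).trace = t * (a + b) := by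
    simp [Jmat, Matrix.trace, Finset.sum_add_distrib]; try ring
  have ha : (t : ℝ) * (a + b) / ((t : ℝ) - 1) = a := by
    rw [div_eq_iff ht1]; linarith
  have hb : b = - (a * (t : ℝ)⁻¹) := by
    field_simp; linarith
  rw [htr, ha]
  ext x y
  simp [Bmat, Jmat]
  rw [hb]; ring

/-- for a symmetric design the cross terms vanish, `C_{dij} = Ĉ_{dij}`,
and each `C_{dij}` is completely symmetric with zero row and column sums, so
`C_{dij} = c_{dij} B_t/(t-1)`. -/
theorem stmt4 (p t n : ℕ) (hp : 2 ≤ p) (ht : 3 ≤ t) (hn : 1 ≤ n)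
    (S : Matrix (Fin p) (Fin p) ℝ) (hS : S.PosDef)
    (w : TrtSeq p t → ℝ) (hw : IsDesign w) (hsym : IsSymmetricDesign w) :
    (∑ s : TrtSeq p t, w s • (Tmat s * Bmat t)) = 0 ∧
    (∑ s : TrtSeq p t, w s • (Fmat s * Bmat t)) = 0 ∧
    (∀ i j : Fin 2, CD n S w i j = ChatD n S w i j) ∧
    (∀ i j : Fin 2, ∃ a b : ℝ,
      CD n S w i j = a • (1 : Matrix (Fin t) (Fin t) ℝ) + b • Jmat t) ∧
    (∀ i j : Fin 2,
      (CD n S w i j *ᵥ fun _ => (1 : ℝ)) = 0 ∧ ((fun _ => (1 : ℝ)) ᵥ* CD n S w i j) = 0) ∧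
    (∀ i j : Fin 2, CD n S w i j = (cD n S w i j / ((t : ℝ) - 1)) • Bmat t) := by
  have hG := fun i => sumGB ht w hsym i
  have hC : ∀ i j : Fin 2, CD n S w i j = ChatD n S w i j := by
    intro i j
    rw [CD, hG i, hG j]; simp
  have hcs := fun i j => cs_of_inv ht (ChatD n S w i j) (ChatD_inv n S w hsym i j)
  refine ⟨by simpa [Gmat] using hG 0, by simpa [Gmat] using hG 1, hC, ?_, ?_, ?_⟩
  · intro i j
    rw [hC]; exact hcs i j
  · intro i j
    rw [hC]; exact ⟨ChatD_one ht n S w i j, one_ChatD ht n S w i j⟩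
  · intro i j
    rw [hC]; exact eq_smul_Bmat ht _ (hcs i j) (ChatD_one ht n S w i j)
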